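/- arXiv:0903.5004 — 2 statements merged into one kernel-verified Lean document; each statement's English description precedes it below -/
import Mathlib

section
/- For the nilpotent algebra A on ℂ² = span{x, θ} with θ² = x and all other products of basis vectors zero, the Hochschild cohomology group Hⁿ(A,A) is 2-dimensional for every n ≥ 0. -/
/-- The underlying 2-dimensional complex vector space, with coordinates in the
basis `x = (1,0)`, `θ = (0,1)`. -/
abbrev V : Type := ℂ × ℂ

/-- A multiplication `V → V → V` is bilinear. -/
def IsBilin (m : V → V → V) : Prop :=
  (∀ a b c : V, m (a + b) c = m a c + m b c) ∧
  (∀ (s : ℂ) (a b : V), m (s • a) b = s • m a b) ∧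
  (∀ a b c : V, m a (b + c) = m a b + m a c) ∧
  (∀ (s : ℂ) (a b : V), m a (s • b) = s • m a b)

/-- Associativity of a multiplication. -/
def IsAssoc (m : V → V → V) : Prop :=
  ∀ a b c : V, m (m a b) c = m a (m b c)

/-- Two multiplications on `V` are isomorphic algebra structures. -/
def AlgIso (m m' : V → V → V) : Prop :=
  ∃ g : V ≃ₗ[ℂ] V, ∀ a b : V, m' a b = g.symm (m (g a) (g b))

/-- `d₁`: `x² = x`, `θ² = θ`, `xθ = θx = 0`. -/
def mul1 (a b : V) : V := (a.1 * b.1, a.2 * b.2)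
/-- `d₂`: `θ² = θ`, other products `0`. -/
def mul2 (a b : V) : V := (0, a.2 * b.2)
/-- `d₃`: `xθ = x`, `θ² = θ`, other products `0`. -/
def mul3 (a b : V) : V := (a.1 * b.2, a.2 * b.2)
/-- `d₄`: `θx = x`, `θ² = θ`, other products `0`. -/
def mul4 (a b : V) : V := (a.2 * b.1, a.2 * b.2)
/-- `d₅`: `xθ = θx = x`, `θ² = θ`, `x² = 0`. -/
def mul5 (a b : V) : V := (a.1 * b.2 + a.2 * b.1, a.2 * b.2)
/-- `d₆`: `θ² = x`, other products `0`. -/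
def mul6 (a b : V) : V := (a.2 * b.2, 0)

open Finset in
/-- The sequence obtained from `a : Fin (n+1) → V` by multiplying the entries
in positions `i` and `i+1`. -/
noncomputable def mergeAt (mul : V → V → V) {n : ℕ} (a : Fin (n + 1) → V) (i : Fin n) :
    Fin n → V := fun j =>
  if (j : ℕ) < (i : ℕ) then a (Fin.castSucc j)
  else if (j : ℕ) = (i : ℕ) then mul (a (Fin.castSucc j)) (a j.succ)
  else a j.succ

open Finset in
/-- The Hochschild coboundary of an `n`-cochain (as a raw function). -/
noncomputable def hD (mul : V → V → V) (n : ℕ) (f : (Fin n → V) → V) :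
    (Fin (n + 1) → V) → V := fun a =>
  mul (a 0) (f fun j => a j.succ)
    + ∑ i : Fin n, ((-1 : ℂ) ^ ((i : ℕ) + 1)) • f (mergeAt mul a i)
    + ((-1 : ℂ) ^ (n + 1)) • mul (f fun j => a (Fin.castSucc j)) (a (Fin.last n))

/-- Hochschild `n`-cochains: multilinear maps `Vⁿ → V`. -/
abbrev Cochain (n : ℕ) := MultilinearMap ℂ (fun _ : Fin n => V) V

/-- An `n`-cochain is a Hochschild cocycle. -/
def IsCocycle (mul : V → V → V) {n : ℕ} (φ : Cochain n) : Prop :=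
  ∀ a : Fin (n + 1) → V, hD mul n (⇑φ) a = 0

/-- A function `Vⁿ⁺¹ → V` is a Hochschild coboundary. -/
def IsCoboundary (mul : V → V → V) (n : ℕ) (f : (Fin (n + 1) → V) → V) : Prop :=
  ∃ ψ : Cochain n, hD mul n (⇑ψ) = f

/-! ### Scalar cochains as coordinate trees -/

/-- Coordinates of scalar `n`-cochains: an `(n+1)`-cochain is a pair
(value on `θ ⊗ -`, value on `x ⊗ -`). -/
def W : ℕ → Type
  | 0 => ℂ
  | n + 1 => W n × W n

noncomputable instance instW : ∀ n, AddCommGroup (W n)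
  | 0 => inferInstanceAs (AddCommGroup ℂ)
  | n + 1 => letI := instW n; inferInstanceAs (AddCommGroup (W n × W n))

noncomputable instance instWM : ∀ n, Module ℂ (W n)
  | 0 => inferInstanceAs (Module ℂ ℂ)
  | n + 1 => letI := instWM n; inferInstanceAs (Module ℂ (W n × W n))

namespace W

def mk {n : ℕ} (u v : W n) : W (n + 1) := (u, v)
def one : W 0 := (1 : ℂ)

theorem mk_add {n} (u v u' v' : W n) : mk u v + mk u' v' = mk (u + u') (v + v') := rfl
theorem mk_sub {n} (u v u' v' : W n) : mk u v - mk u' v' = mk (u - u') (v - v') := rfl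
theorem mk_neg {n} (u v : W n) : -mk u v = mk (-u) (-v) := rfl
theorem mk_smul {n} (c : ℂ) (u v : W n) : c • mk u v = mk (c • u) (c • v) := rfl
theorem mk_zero {n} : mk (0 : W n) 0 = 0 := rfl
theorem mk_inj {n} {u v u' v' : W n} : mk u v = mk u' v' ↔ u = u' ∧ v = v' := Prod.mk_inj
theorem mk_eq_zero {n} {u v : W n} : mk u v = 0 ↔ u = 0 ∧ v = 0 := Prod.mk_inj
theorem exists_mk {n} (w : W (n + 1)) : ∃ u v, w = mk u v := ⟨w.1, w.2, rfl⟩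
theorem exists_one (w : W 0) : ∃ c : ℂ, w = c • one :=
  ⟨w, (mul_one (show ℂ from w)).symm⟩
theorem smul_one_eq_zero {c : ℂ} (h : c • one = 0) : c = 0 :=
  (mul_one c).symm.trans h

/-- The bar differential. -/
noncomputable def d : ∀ n, W n → W (n + 1)
  | 0, _ => 0
  | n + 1, w => mk (-(d n w.1 + mk w.2 0)) (-(d n w.2))

/-- Right multiplication by the class `θ*`. -/
noncomputable def R : ∀ n, W n → W (n + 1)
  | 0, w => mk w 0
  | n + 1, w => mk (R n w.1) (R n w.2)

theorem d_zero' (w : W 0) : d 0 w = 0 := rfl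
theorem d_mk {n} (u v : W n) : d (n + 1) (mk u v) = mk (-(d n u + mk v 0)) (-(d n v)) := rfl
theorem R_zero' (w : W 0) : R 0 w = mk w 0 := rfl
theorem R_mk {n} (u v : W n) : R (n + 1) (mk u v) = mk (R n u) (R n v) := rfl

theorem d_add : ∀ {n} (a b : W n), d n (a + b) = d n a + d n b
  | 0, a, b => by simp [d_zero']
  | n + 1, a, b => by
    obtain ⟨u, v, rfl⟩ := exists_mk a
    obtain ⟨u', v', rfl⟩ := exists_mk b
    have h : mk (v + v') (0 : W n) = mk v 0 + mk v' 0 := by rw [mk_add, add_zero]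
    rw [mk_add, d_mk, d_mk, d_mk, mk_add, mk_inj, d_add u, d_add v, h]
    constructor <;> abel

theorem d_smul : ∀ {n} (c : ℂ) (a : W n), d n (c • a) = c • d n a
  | 0, c, a => by simp [d_zero']
  | n + 1, c, a => by
    obtain ⟨u, v, rfl⟩ := exists_mk a
    have h : mk (c • v) (0 : W n) = c • mk v 0 := by rw [mk_smul, smul_zero]
    simp only [mk_smul, d_mk, d_smul, h, smul_neg, smul_add]

theorem R_add : ∀ {n} (a b : W n), R n (a + b) = R n a + R n b
  | 0, a, b => by simp [R_zero', mk_add]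
  | n + 1, a, b => by
    obtain ⟨u, v, rfl⟩ := exists_mk a
    obtain ⟨u', v', rfl⟩ := exists_mk b
    simp only [mk_add, R_mk, R_add]

theorem R_smul : ∀ {n} (c : ℂ) (a : W n), R n (c • a) = c • R n a
  | 0, c, a => by simp [R_zero', mk_smul]
  | n + 1, c, a => by
    obtain ⟨u, v, rfl⟩ := exists_mk a
    simp only [mk_smul, R_mk, R_smul]

theorem d_zero {n} : d n 0 = 0 := by simpa using d_smul (n := n) 0 0
theorem R_zero {n} : R n 0 = 0 := by simpa using R_smul (n := n) 0 0
theorem d_neg {n} (a : W n) : d n (-a) = -d n a := by simpa using d_smul (-1) a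
theorem R_neg {n} (a : W n) : R n (-a) = -R n a := by simpa using R_smul (-1) a
theorem d_sub {n} (a b : W n) : d n (a - b) = d n a - d n b := by
  rw [sub_eq_add_neg, d_add, d_neg, sub_eq_add_neg]

/-- Left multiplication by `θ*`. -/
noncomputable def L {n} (w : W n) : W (n + 1) := mk w 0

theorem L_add {n} (a b : W n) : L (a + b) = L a + L b := by simp [L, mk_add]
theorem L_smul {n} (c : ℂ) (a : W n) : L (c • a) = c • L a := by simp [L, mk_smul]
theorem d_L {n} (w : W n) : d (n + 1) (L w) = -L (d n w) := by
  simp [L, d_mk, d_zero, mk_zero, mk_neg]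

theorem R_L {n} (w : W n) : R (n + 1) (L w) = L (R n w) := by
  simp [L, R_mk, R_zero]

theorem d_R : ∀ {n} (w : W n), d (n + 1) (R n w) = R (n + 1) (d n w)
  | 0, w => by simp [R_zero', d_mk, d_zero', R_zero, mk_zero]
  | n + 1, w => by
    obtain ⟨u, v, rfl⟩ := exists_mk w
    have h : mk (R n v) 0 = R (n + 1) (mk v 0) := (R_L v).symm
    simp only [R_mk, d_mk, d_R, h, R_neg, R_add]

theorem d_d : ∀ {n} (w : W n), d (n + 1) (d n w) = 0
  | 0, w => by rw [d_zero', d_zero]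
  | n + 1, w => by
    obtain ⟨u, v, rfl⟩ := exists_mk w
    have h := d_L v
    simp only [L] at h
    simp only [d_mk, d_neg, d_add, d_d, h, mk_eq_zero]
    constructor
    · rw [zero_add, ← mk_neg_zero]; abel
    · simp
where
  mk_neg_zero {n} {v : W n} : -mk v 0 = mk (-v) 0 := by rw [mk_neg, neg_zero]

/-- Left multiplication by the degree two class. -/
noncomputable def S {n} (w : W n) : W (n + 2) := mk (mk 0 w) (mk w 0)

theorem d_S {n} (w : W n) : d (n + 2) (S w) = S (d n w) := by
  simp [S, d_mk, d_zero, mk_neg, mk_add, mk_zero]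

theorem R_S {n} (w : W n) : R (n + 2) (S w) = S (R n w) := by
  simp [S, R_mk, R_zero]

theorem S_add {n} (a b : W n) : S (a + b) = S a + S b := by simp [S, mk_add]
theorem S_smul {n} (c : ℂ) (a : W n) : S (c • a) = c • S a := by simp [S, mk_smul]

theorem L_S {n} (w : W n) (hw : d n w = 0) :
    L (S w) = S (L w) - d (n + 2) (mk 0 (mk 0 w)) := by
  simp [S, L, d_mk, d_zero, mk_neg, mk_add, hw, mk_sub, mk_zero]

/-- Generators. -/
noncomputable def e : ∀ n, W n
  | 0 => one
  | 1 => mk one 0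
  | n + 2 => S (e n)

/-- Primitive of the graded commutator of `θ*` with the generator. -/
noncomputable def g : ∀ n, W n
  | 0 => 0
  | 1 => mk 0 ((-2 : ℂ) • one)
  | n + 2 => S (g n) - mk 0 (mk 0 (e n))

theorem d_e : ∀ n, d n (e n) = 0
  | 0 => rfl
  | 1 => by simp [e, d_mk, d_zero', mk_zero]
  | n + 2 => by rw [e, d_S, d_e n]; simp [S, mk_zero]

/-- Graded commutator with `θ*`. -/
noncomputable def K (n : ℕ) (w : W n) : W (n + 1) := L w + (-1 : ℂ) ^ (n + 1) • R n w

theorem K_add {n} (a b : W n) : K n (a + b) = K n a + K n b := by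
  simp only [K, L_add, R_add, smul_add]; abel
theorem K_smul {n} (c : ℂ) (a : W n) : K n (c • a) = c • K n a := by
  simp only [K, L_smul, R_smul, smul_add, smul_comm c]
theorem K_zero {n} : K n 0 = 0 := by simpa using K_smul (n := n) 0 0

theorem K_e : ∀ n, K n (e n) = d n (g n)
  | 0 => by simp [K, e, g, L, R_zero', d_zero']
  | 1 => by
    simp [K, e, g, L, R_zero', R_mk, R_zero, d_mk, d_zero', mk_add, mk_neg, mk_zero, mk_inj,
      two_smul]
  | n + 2 => by
    have ih := K_e n
    rw [g, d_sub, d_S, ← ih, K, e, L_S _ (d_e n), R_S, K, S_add, S_smul, pow_add _ (n + 1) 2]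
    norm_num
    abel

theorem K_d {n} (p : W n) : K (n + 1) (d n p) = -d (n + 1) (K n p) := by
  rw [K, K, d_add, d_smul, d_L, d_R, pow_succ _ (n + 1)]
  simp [add_comm]

/-- Being a coboundary in degree `n` (only zero in degree `0`). -/
def IsB : ∀ n, W n → Prop
  | 0, w => w = 0
  | n + 1, w => ∃ p, d n p = w

theorem isB_of_S : ∀ {n} (w : W n), IsB (n + 2) (S w) → IsB n w
  | 0, w, ⟨p, hp⟩ => by
    obtain ⟨p, q, rfl⟩ := exists_mk p
    simp only [S, d_mk, d_zero', mk_inj, mk_neg, zero_add, neg_zero] at hp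
    exact hp.1.2.symm
  | n + 1, w, ⟨p, hp⟩ => by
    obtain ⟨p, q, rfl⟩ := exists_mk p
    obtain ⟨p1, p2, rfl⟩ := exists_mk p
    simp only [S, d_mk, mk_inj, mk_neg, mk_add] at hp
    refine ⟨p2, ?_⟩
    simpa using hp.1.2

theorem isB_step {n} (u1 u2 v : W n) (v' : W n) (hw : d (n + 2) (mk (mk u1 u2) (mk v v')) = 0) :
    d n u2 = 0 ∧ mk v v' = d n u1 + L u2 := by
  simp only [d_mk, mk_neg, mk_add, mk_eq_zero, neg_eq_zero] at hw
  obtain ⟨⟨h1, h2⟩, h3⟩ := hw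
  refine ⟨by simpa using h2, ?_⟩
  rw [← sub_eq_zero, ← h1, L]; abel

theorem span : ∀ n (w : W n), d n w = 0 → ∃ c : ℂ, IsB n (w - c • e n)
  | 0, w, _ => by
    obtain ⟨c, rfl⟩ := exists_one w
    exact ⟨c, sub_self _⟩
  | 1, w, h => by
    obtain ⟨u, v, rfl⟩ := exists_mk w
    obtain ⟨c, rfl⟩ := exists_one u
    simp only [d_mk, mk_eq_zero, d_zero', neg_eq_zero, zero_add] at h
    refine ⟨c, 0, ?_⟩
    simp [d_zero', e, mk_smul, mk_sub, h.1.1, mk_zero]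
  | n + 2, w, h => by
    obtain ⟨u, v, rfl⟩ := exists_mk w
    obtain ⟨u1, u2, rfl⟩ := exists_mk u
    obtain ⟨v1, v2, rfl⟩ := exists_mk v
    obtain ⟨h2, hv⟩ := isB_step _ _ _ _ h
    obtain ⟨c, hc⟩ := span n u2 h2
    refine ⟨c, ?_⟩
    rw [hv]
    match n, u1, u2, hc with
    | 0, u1, u2, hc =>
      have hc : u2 = c • e 0 := sub_eq_zero.1 hc
      subst hc
      refine ⟨mk 0 (-u1), ?_⟩
      simp [d_mk, d_zero', L, e, S, mk_smul, mk_sub, mk_neg, mk_zero]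
    | n + 1, u1, u2, ⟨p, hp⟩ =>
      have hc : u2 = d n p + c • e (n + 1) := by rw [hp]; abel
      subst hc
      refine ⟨mk (mk 0 p) (L p - u1), ?_⟩
      simp only [e.eq_3, S, d_mk, d_zero, d_sub, d_L, mk_smul, mk_sub, mk_inj, mk_neg, mk_add,
        L_add]
      simp only [L, mk_smul]
      refine ⟨⟨?_, ?_⟩, ?_⟩
      · simp
      · simp
      · simp only [smul_zero]; abel

theorem indep : ∀ n (c : ℂ), IsB n (c • e n) → c = 0
  | 0, c, h => smul_one_eq_zero h
  | 1, c, ⟨p, hp⟩ => by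
    rw [d_zero', e, mk_smul, eq_comm, mk_eq_zero] at hp
    exact smul_one_eq_zero hp.1
  | n + 2, c, h => by
    rw [e, ← S_smul] at h
    exact indep n c (isB_of_S _ h)

theorem K_cocycle {n} (w : W n) (h : d n w = 0) : ∃ q, K n w = d n q := by
  obtain ⟨c, hc⟩ := span n w h
  match n, w, hc with
  | 0, w, hc =>
    have hc : w = c • e 0 := sub_eq_zero.1 hc
    exact ⟨c • g 0, by rw [hc, K_smul, K_e, d_smul]⟩
  | n + 1, w, ⟨p, hp⟩ =>
    have hc : w = d n p + c • e (n + 1) := by rw [hp]; abel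
    exact ⟨-K n p + c • g (n + 1), by rw [hc, K_add, K_smul, K_e, K_d, d_add, d_smul, d_neg]⟩

/-! ### The bridge to multilinear maps -/

/-- The scalar multilinear map with given coordinates. -/
noncomputable def dec : ∀ n, W n → MultilinearMap ℂ (fun _ : Fin n => V) ℂ
  | 0, w => MultilinearMap.constOfIsEmpty ℂ _ (show ℂ from w)
  | n + 1, w => LinearMap.uncurryLeft
      ((LinearMap.snd ℂ ℂ ℂ).smulRight (dec n w.1) + (LinearMap.fst ℂ ℂ ℂ).smulRight (dec n w.2))

theorem dec_zero' (w : W 0) (a : Fin 0 → V) : dec 0 w a = (show ℂ from w) := rfl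
theorem dec_mk {n} (u v : W n) (a : Fin (n + 1) → V) :
    dec (n + 1) (mk u v) a =
      (a 0).2 * dec n u (fun j => a j.succ) + (a 0).1 * dec n v (fun j => a j.succ) := rfl

theorem dec_add : ∀ {n} (w w' : W n) (a : Fin n → V), dec n (w + w') a = dec n w a + dec n w' a
  | 0, w, w', a => rfl
  | n + 1, w, w', a => by
    obtain ⟨u, v, rfl⟩ := exists_mk w
    obtain ⟨u', v', rfl⟩ := exists_mk w'
    simp only [mk_add, dec_mk, dec_add]; ring

theorem dec_smul : ∀ {n} (c : ℂ) (w : W n) (a : Fin n → V), dec n (c • w) a = c * dec n w a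
  | 0, c, w, a => rfl
  | n + 1, c, w, a => by
    obtain ⟨u, v, rfl⟩ := exists_mk w
    simp only [mk_smul, dec_mk, dec_smul]; ring

theorem dec_zero {n} (a : Fin n → V) : dec n 0 a = 0 := by simpa using dec_smul (n := n) 0 0 a
theorem dec_neg {n} (w : W n) (a : Fin n → V) : dec n (-w) a = -dec n w a := by
  simpa using dec_smul (-1) w a

theorem dec_eq_zero : ∀ {n} (w : W n), (∀ a, dec n w a = 0) → w = 0
  | 0, w, h => h Fin.elim0
  | n + 1, w, h => by
    obtain ⟨u, v, rfl⟩ := exists_mk w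
    rw [mk_eq_zero]
    constructor
    · refine dec_eq_zero u fun a => ?_
      have := h (Fin.cons ((0, 1) : V) a)
      simpa [dec_mk] using this
    · refine dec_eq_zero v fun a => ?_
      have := h (Fin.cons ((1, 0) : V) a)
      simpa [dec_mk] using this

theorem dec_surj : ∀ {n} (f : MultilinearMap ℂ (fun _ : Fin n => V) ℂ), ∃ w, dec n w = f
  | 0, f => ⟨(f Fin.elim0 : ℂ), by
      ext a
      exact congrArg f (Subsingleton.elim _ _)⟩
  | n + 1, f => by
    obtain ⟨u, hu⟩ := dec_surj (f.curryLeft ((0, 1) : V))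
    obtain ⟨v, hv⟩ := dec_surj (f.curryLeft ((1, 0) : V))
    refine ⟨mk u v, ?_⟩
    ext a
    rw [dec_mk, hu, hv]
    have h : (a 0).2 • f.curryLeft ((0, 1) : V) + (a 0).1 • f.curryLeft ((1, 0) : V)
        = f.curryLeft (a 0) := by
      rw [← map_smul, ← map_smul, ← map_add]
      congr 1
      ext <;> simp
    have h2 := congrArg (fun F => F (fun j => a j.succ)) h
    refine Eq.trans h2 ?_
    simp only [MultilinearMap.curryLeft_apply]
    congr 1
    exact Fin.cons_self_tail a

theorem dec_L {n} (w : W n) (a : Fin (n + 1) → V) :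
    dec (n + 1) (L w) a = (a 0).2 * dec n w (fun j => a j.succ) := by
  simp [L, dec_mk, dec_zero]

theorem dec_R : ∀ {n} (w : W n) (a : Fin (n + 1) → V),
    dec (n + 1) (R n w) a = dec n w (fun j => a j.castSucc) * (a (Fin.last n)).2
  | 0, w, a => by
    rw [R_zero', dec_mk, dec_zero, dec_zero', dec_zero']
    simp only [mul_zero, add_zero]
    exact mul_comm (a 0).2 (show ℂ from w)
  | n + 1, w, a => by
    obtain ⟨u, v, rfl⟩ := exists_mk w
    rw [R_mk, dec_mk, dec_R, dec_R, dec_mk]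
    simp only [Fin.succ_last, Fin.castSucc_zero, Fin.succ_castSucc]
    ring

theorem mergeAt_zero {n} (a : Fin (n + 2) → V) :
    mergeAt mul6 a 0 = Fin.cons (mul6 (a 0) (a 1)) (fun j => a j.succ.succ) := by
  funext j
  refine Fin.cases ?_ (fun j => ?_) j <;> simp [mergeAt]

theorem dec_d : ∀ {n} (w : W n) (a : Fin (n + 1) → V),
    dec (n + 1) (d n w) a =
      ∑ i : Fin n, ((-1 : ℂ) ^ ((i : ℕ) + 1)) * dec n w (mergeAt mul6 a i)
  | 0, w, a => by simp [d_zero', dec_zero]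
  | n + 1, w, a => by
    obtain ⟨u, v, rfl⟩ := exists_mk w
    have hs : ∀ i : Fin n, mergeAt mul6 a i.succ
        = Fin.cons (a 0) (mergeAt mul6 (fun j => a j.succ) i) := by
      intro i
      funext j
      refine Fin.cases ?_ (fun j => ?_) j <;> simp [mergeAt]
    have h0 : mk v 0 = L v := rfl
    rw [Fin.sum_univ_succ, mergeAt_zero]
    simp only [hs, dec_mk, d_mk, dec_neg, dec_add, dec_d, Fin.cons_zero, Fin.cons_succ, h0, dec_L,
      mul_add, Finset.sum_add_distrib, mul6]
    simp only [neg_add, mul_add, Finset.mul_sum, ← Finset.sum_neg_distrib, mul_neg]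
    simp only [Fin.val_succ, Fin.val_zero, pow_succ]
    simp only [← Finset.sum_neg_distrib, mul_neg, neg_mul, mul_one, neg_neg, Fin.succ_zero_eq_one]
    simp only [mul_left_comm]
    simp
    ring

/-- The cochain with given coordinates. -/
noncomputable def toC (n : ℕ) (f1 f2 : W n) : Cochain n := (dec n f1).prod (dec n f2)

theorem toC_apply {n} (f1 f2 : W n) (a) : toC n f1 f2 a = (dec n f1 a, dec n f2 a) := rfl

theorem toC_surj {n} (φ : Cochain n) : ∃ f1 f2, φ = toC n f1 f2 := by
  obtain ⟨f1, h1⟩ := dec_surj ((LinearMap.fst ℂ ℂ ℂ).compMultilinearMap φ)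
  obtain ⟨f2, h2⟩ := dec_surj ((LinearMap.snd ℂ ℂ ℂ).compMultilinearMap φ)
  refine ⟨f1, f2, ?_⟩
  refine MultilinearMap.ext fun a => ?_
  rw [toC_apply, h1, h2]; rfl

theorem hD_toC {n} (f1 f2 : W n) :
    hD mul6 n (toC n f1 f2) = toC (n + 1) (K n f2 + d n f1) (d n f2) := by
  funext a
  rw [toC_apply, K, dec_add, dec_add, dec_L, dec_smul, dec_R, dec_d, dec_d]
  simp only [hD, toC_apply, mul6]
  ext
  · simp [Prod.fst_sum]; ring
  · simp [Prod.snd_sum]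

theorem toC_add {n} (f1 f2 g1 g2 : W n) :
    (⇑(toC n f1 f2) + ⇑(toC n g1 g2)) = ⇑(toC n (f1 + g1) (f2 + g2)) := by
  funext a; simp [toC_apply, dec_add]

theorem toC_smul {n} (c : ℂ) (f1 f2 : W n) :
    c • ⇑(toC n f1 f2) = ⇑(toC n (c • f1) (c • f2)) := by
  funext a; simp [toC_apply, dec_smul]

theorem toC_sub {n} (f1 f2 g1 g2 : W n) :
    (⇑(toC n f1 f2) - ⇑(toC n g1 g2)) = ⇑(toC n (f1 - g1) (f2 - g2)) := by
  funext a; simp [toC_apply, dec_add, dec_neg, sub_eq_add_neg]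

theorem toC_inj {n} {f1 f2 g1 g2 : W n} (h : ⇑(toC n f1 f2) = ⇑(toC n g1 g2)) :
    f1 = g1 ∧ f2 = g2 := by
  have h' : ∀ a, toC n (f1 - g1) (f2 - g2) a = 0 := fun a => by
    rw [← toC_sub, h]; simp
  simp only [toC_apply, Prod.mk_eq_zero] at h'
  exact ⟨sub_eq_zero.1 (dec_eq_zero _ fun a => (h' a).1),
    sub_eq_zero.1 (dec_eq_zero _ fun a => (h' a).2)⟩

theorem isCocycle_iff {n} (f1 f2 : W n) :
    IsCocycle mul6 (toC n f1 f2) ↔ K n f2 + d n f1 = 0 ∧ d n f2 = 0 := by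
  constructor
  · intro h
    refine toC_inj (g1 := 0) (g2 := 0) ?_
    rw [← hD_toC]
    funext a
    rw [h a, toC_apply, dec_zero]; rfl
  · rintro ⟨h1, h2⟩ a
    rw [hD_toC, h1, h2, toC_apply, dec_zero]; rfl

theorem isCoboundary_iff {n} (w1 w2 : W (n + 1)) :
    IsCoboundary mul6 n (toC (n + 1) w1 w2) ↔
      ∃ f1 f2, K n f2 + d n f1 = w1 ∧ d n f2 = w2 := by
  constructor
  · rintro ⟨ψ, hψ⟩
    obtain ⟨f1, f2, rfl⟩ := toC_surj ψ
    rw [hD_toC] at hψ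
    exact ⟨f1, f2, toC_inj hψ⟩
  · rintro ⟨f1, f2, rfl, rfl⟩
    exact ⟨toC n f1 f2, hD_toC _ _⟩

end W


/-- For the nilpotent algebra `d₆` (`θ² = x`, other products zero), the
Hochschild cohomology `Hⁿ(A,A)` is 2-dimensional for every `n ≥ 0`:
in degree `0` every 0-cochain is a cocycle (so `H⁰ = A` is 2-dimensional),
and in each degree `n + 1` there are two cocycles whose classes are linearly
independent and span the cohomology. -/
theorem stmt12 :
    (∀ φ : Cochain 0, IsCocycle mul6 φ) ∧
    (∀ n : ℕ, ∃ φ₁ φ₂ : Cochain (n + 1),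
      IsCocycle mul6 φ₁ ∧ IsCocycle mul6 φ₂ ∧
      (∀ c₁ c₂ : ℂ, IsCoboundary mul6 n (c₁ • ⇑φ₁ + c₂ • ⇑φ₂) →
        c₁ = 0 ∧ c₂ = 0) ∧
      (∀ φ : Cochain (n + 1), IsCocycle mul6 φ →
        ∃ c₁ c₂ : ℂ, IsCoboundary mul6 n (⇑φ - c₁ • ⇑φ₁ - c₂ • ⇑φ₂))) := by
  constructor
  · intro φ
    obtain ⟨f1, f2, rfl⟩ := W.toC_surj φ
    rw [W.isCocycle_iff]
    refine ⟨?_, rfl⟩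
    simp [W.K, W.L, W.R_zero', W.d_zero']
  · intro n
    refine ⟨W.toC _ (W.e (n + 1)) 0, W.toC _ (-W.g (n + 1)) (W.e (n + 1)), ?_, ?_, ?_, ?_⟩
    · rw [W.isCocycle_iff]
      simp [W.d_e, W.d_zero, W.K_zero]
    · rw [W.isCocycle_iff]
      simp [W.d_e, W.K_e, W.d_neg]
    · intro c₁ c₂ h
      rw [W.toC_smul, W.toC_smul, W.toC_add, W.isCoboundary_iff] at h
      obtain ⟨f1, f2, h1, h2⟩ := h
      have hc2 : c₂ = 0 := W.indep (n + 1) c₂ ⟨f2, by simpa using h2⟩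
      subst hc2
      refine ⟨?_, rfl⟩
      obtain ⟨q, hq⟩ := W.K_cocycle f2 (by simpa using h2)
      refine W.indep (n + 1) c₁ ⟨q + f1, ?_⟩
      rw [W.d_add, ← hq, h1]; simp
    · intro φ hφ
      obtain ⟨f1, f2, rfl⟩ := W.toC_surj φ
      rw [W.isCocycle_iff] at hφ
      obtain ⟨h1, h2⟩ := hφ
      obtain ⟨c₂, p, hp⟩ := W.span (n + 1) f2 h2
      have hf2 : f2 = W.d n p + c₂ • W.e (n + 1) := by rw [hp]; abel
      have h3 : W.d (n + 1) (f1 + c₂ • W.g (n + 1) - W.K n p) = 0 := by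
        rw [hf2, W.K_add, W.K_smul, W.K_e, W.K_d] at h1
        rw [W.d_sub, W.d_add, W.d_smul, ← h1]; abel
      obtain ⟨c₁, q, hq⟩ := W.span (n + 1) _ h3
      refine ⟨c₁, c₂, ?_⟩
      rw [W.toC_smul, W.toC_smul, W.toC_sub, W.toC_sub, W.isCoboundary_iff]
      refine ⟨q, p, ?_, ?_⟩
      · rw [hq, smul_neg]; abel
      · rw [hp]; simp
end

section
/- The six 2-dimensional complex algebras d₁ (x²=x, θ²=θ, xθ=θx=0), d₂ (θ²=θ, other products 0), d₃ (xθ=x, θ²=θ, other products 0), d₄ (θx=x, θ²=θ, other products 0), d₅ (xθ=θx=x, θ²=θ, x²=0), and d₆ (θ²=x, other products 0) are pairwise non-isomorphic. -/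
/-- Existence of a left unit. -/
def HasL (m : V → V → V) : Prop := ∃ e, ∀ a, m e a = a
/-- Existence of a right unit. -/
def HasR (m : V → V → V) : Prop := ∃ e, ∀ a, m a e = a
/-- Existence of a nonzero element of square zero. -/
def HasN (m : V → V → V) : Prop := ∃ a, a ≠ 0 ∧ m a a = 0
/-- Existence of a nonzero idempotent. -/
def HasI (m : V → V → V) : Prop := ∃ a, a ≠ 0 ∧ m a a = a

theorem AlgIso.symm' {m m' : V → V → V} (h : AlgIso m m') : AlgIso m' m := by
  obtain ⟨g, h⟩ := h
  exact ⟨g.symm, fun a b => by simp [h]⟩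

theorem AlgIso.invs {m m' : V → V → V} (h : AlgIso m m') :
    (HasL m → HasL m') ∧ (HasR m → HasR m') ∧ (HasN m → HasN m') ∧ (HasI m → HasI m') := by
  obtain ⟨g, h⟩ := h
  refine ⟨?_, ?_, ?_, ?_⟩
  · rintro ⟨e, he⟩
    exact ⟨g.symm e, fun a => by simp [h, he]⟩
  · rintro ⟨e, he⟩
    exact ⟨g.symm e, fun a => by simp [h, he]⟩
  · rintro ⟨e, h0, he⟩
    exact ⟨g.symm e, by simpa using h0, by simp [h, he]⟩
  · rintro ⟨e, h0, he⟩
    exact ⟨g.symm e, by simpa using h0, by simp [h, he]⟩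

theorem hasL1 : HasL mul1 := ⟨(1,1), fun a => by simp [mul1]⟩
theorem notL2 : ¬ HasL mul2 := by
  rintro ⟨e, he⟩
  have := he (1,0)
  simp [mul2] at this
theorem notL3 : ¬ HasL mul3 := by
  rintro ⟨e, he⟩
  have := he (1,0)
  simp [mul3] at this
theorem hasL4 : HasL mul4 := ⟨(0,1), fun a => by simp [mul4]⟩
theorem hasL5 : HasL mul5 := ⟨(0,1), fun a => by simp [mul5]⟩
theorem notL6 : ¬ HasL mul6 := by
  rintro ⟨e, he⟩
  have := he (0,1)
  simp [mul6] at this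
theorem hasR1 : HasR mul1 := ⟨(1,1), fun a => by simp [mul1]⟩
theorem notR2 : ¬ HasR mul2 := by
  rintro ⟨e, he⟩
  have := he (1,0)
  simp [mul2] at this
theorem hasR3 : HasR mul3 := ⟨(0,1), fun a => by simp [mul3]⟩
theorem notR4 : ¬ HasR mul4 := by
  rintro ⟨e, he⟩
  have := he (1,0)
  simp [mul4] at this
theorem hasR5 : HasR mul5 := ⟨(0,1), fun a => by simp [mul5]⟩
theorem notR6 : ¬ HasR mul6 := by
  rintro ⟨e, he⟩
  have := he (0,1)
  simp [mul6] at this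
theorem notN1 : ¬ HasN mul1 := by
  rintro ⟨e, h0, he⟩
  simp only [mul1, Prod.ext_iff, Prod.fst_zero, Prod.snd_zero, mul_self_eq_zero] at he
  exact h0 (Prod.ext he.1 he.2)
theorem hasN5 : HasN mul5 := ⟨(1,0), by simp, by simp [mul5]⟩
theorem hasI2 : HasI mul2 := ⟨(0,1), by simp, by simp [mul2]⟩
theorem notI6 : ¬ HasI mul6 := by
  rintro ⟨⟨a, b⟩, h0, he⟩
  simp only [mul6, Prod.mk.injEq] at he
  obtain ⟨h1, h2⟩ := he
  subst h2
  simp at h1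
  subst h1
  exact h0 rfl

/-- The six 2-dimensional complex algebras `d₁, …, d₆` are pairwise
non-isomorphic. -/
theorem stmt18 :
    ∀ m m' : V → V → V, m ∈ [mul1, mul2, mul3, mul4, mul5, mul6] →
      m' ∈ [mul1, mul2, mul3, mul4, mul5, mul6] → m ≠ m' → ¬ AlgIso m m' := by
  intro m m' hm hm' hne h
  obtain ⟨l, r, n, i⟩ := h.invs
  obtain ⟨l', r', n', i'⟩ := h.symm'.invs
  simp only [List.mem_cons, List.not_mem_nil, or_false] at hm hm'
  rcases hm with rfl | rfl | rfl | rfl | rfl | rfl <;>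
  rcases hm' with rfl | rfl | rfl | rfl | rfl | rfl <;>
  first
  | exact hne rfl
  | exact notL2 (l hasL1)
  | exact notL2 (l' hasL1)
  | exact notL3 (l hasL1)
  | exact notL3 (l' hasL1)
  | exact notL6 (l hasL1)
  | exact notL6 (l' hasL1)
  | exact notL2 (l hasL4)
  | exact notL2 (l' hasL4)
  | exact notL3 (l hasL4)
  | exact notL3 (l' hasL4)
  | exact notL6 (l hasL4)
  | exact notL6 (l' hasL4)
  | exact notL2 (l hasL5)
  | exact notL2 (l' hasL5)
  | exact notL3 (l hasL5)
  | exact notL3 (l' hasL5)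
  | exact notL6 (l hasL5)
  | exact notL6 (l' hasL5)
  | exact notR4 (r hasR1)
  | exact notR4 (r' hasR1)
  | exact notR2 (r hasR3)
  | exact notR2 (r' hasR3)
  | exact notR4 (r hasR3)
  | exact notR4 (r' hasR3)
  | exact notR6 (r hasR3)
  | exact notR6 (r' hasR3)
  | exact notR4 (r hasR5)
  | exact notR4 (r' hasR5)
  | exact notN1 (n hasN5)
  | exact notN1 (n' hasN5)
  | exact notI6 (i hasI2)
  | exact notI6 (i' hasI2)
end
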